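/- arXiv:0804.1522 — 6 statements merged into one kernel-verified Lean document; each statement's English description precedes it below -/
import Mathlib

section
/- Let R be a commutative local Artinian ring with residue field k, and let M be a finitely generated R-module. Then the length of M as an R-module satisfies length_R(M) ≤ length_R(R) · dim_k(M ⊗_R k), where M ⊗_R k = M/𝔪M and 𝔪 is the maximal ideal of R. Moreover, equality holds if and only if M is a free R-module. -/
/-!
Put `n = dim_k (k ⊗ M)`. By Nakayama's lemma, lifting a basis of `k ⊗ M` gives a surjection
`Rⁿ → M`, so `length M ≤ length Rⁿ = n • length R` by additivity of length. If equality holds,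
the kernel of the surjection has length zero because all lengths are finite; hence `Rⁿ ≃ M`.
Conversely, a free module of rank `r` has length `r • length R`, and its rank is
preserved by base change to `k`.
-/

open TensorProduct

/-- The length of an `R`-module `M`, defined as the Krull dimension of its lattice of
submodules (for modules of finite length this is the common length of all composition
series). -/
noncomputable def moduleLength (R M : Type*) [Ring R] [AddCommGroup M] [Module R M] :
    WithBot ℕ∞ :=
  Order.krullDim (Submodule R M)

theorem moduleLength_eq_coe_length (R M : Type*) [Ring R] [AddCommGroup M] [Module R M] :
    moduleLength R M = (Module.length R M : WithBot ℕ∞) :=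
  (Module.coe_length R M).symm

/-- A minimal generating family of `M`, presented as a surjection from a free module of rank
`dim_k (k ⊗ M)`. -/
theorem exists_surjective_fin_finrank_residueField
    (R : Type*) [CommRing R] [IsLocalRing R]
    (M : Type*) [AddCommGroup M] [Module R M] [Module.Finite R M] :
    ∃ f : (Fin (Module.finrank (IsLocalRing.ResidueField R)
      (IsLocalRing.ResidueField R ⊗[R] M)) → R) →ₗ[R] M, Function.Surjective f := by
  let b := Module.finBasis (IsLocalRing.ResidueField R) (IsLocalRing.ResidueField R ⊗[R] M)
  obtain ⟨v, hv⟩ := (TensorProduct.mk_surjective R M (IsLocalRing.ResidueField R)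
    Ideal.Quotient.mk_surjective).comp_left b
  refine ⟨Fintype.linearCombination R v, ?_⟩
  rw [← LinearMap.range_eq_top, Fintype.range_linearCombination]
  exact IsLocalRing.span_eq_top_of_tmul_eq_basis v b (congr_fun hv)

/-- Over an Artinian ring, a surjection of finite modules of equal length is injective: its kernel
has length zero. -/
theorem injective_of_surjective_of_length_eq {R M N : Type*} [CommRing R] [IsArtinianRing R]
    [AddCommGroup M] [Module R M] [Module.Finite R M] [AddCommGroup N] [Module R N]
    (f : N →ₗ[R] M) (hf : Function.Surjective f)
    (h : Module.length R M = Module.length R N) : Function.Injective f := by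
  have hadd := Module.length_eq_add_of_exact (LinearMap.ker f).subtype f
    (Submodule.injective_subtype _) hf (LinearMap.exact_subtype_ker_map f)
  have htop : Module.length R M ≠ ⊤ := Module.length_ne_top
  have hker : Module.length R (LinearMap.ker f) = 0 := by
    rw [← h] at hadd
    exact (ENat.add_left_injective_of_ne_top htop (by simpa using hadd)).symm
  rw [Module.length_eq_zero_iff, Submodule.subsingleton_iff_eq_bot] at hker
  exact LinearMap.ker_eq_bot.mp hker

/-- Let `R` be a commutative local Artinian ring with residue field `k`, and let `M` be a
finitely generated `R`-module.  Then
`length_R M ≤ length_R R * dim_k (k ⊗_R M)`, and equality holds if and only if `M` is a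
free `R`-module. -/
theorem length_le_length_smul_finrank_and_eq_iff_free
    (R : Type*) [CommRing R] [IsLocalRing R] [IsArtinianRing R]
    (M : Type*) [AddCommGroup M] [Module R M] [Module.Finite R M] :
    moduleLength R M ≤
      Module.finrank (IsLocalRing.ResidueField R)
        (IsLocalRing.ResidueField R ⊗[R] M) • moduleLength R R ∧
    (moduleLength R M =
      Module.finrank (IsLocalRing.ResidueField R)
        (IsLocalRing.ResidueField R ⊗[R] M) • moduleLength R R ↔
      Module.Free R M) := by
  set n := Module.finrank (IsLocalRing.ResidueField R)
    (IsLocalRing.ResidueField R ⊗[R] M) with hn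
  have hpi : Module.length R (Fin n → R) = n • Module.length R R := by
    simp
  have hsmul : n • moduleLength R R = ((n • Module.length R R : ℕ∞) : WithBot ℕ∞) := by
    rw [moduleLength_eq_coe_length, WithBot.coe_nsmul]
  obtain ⟨f, hf⟩ := exists_surjective_fin_finrank_residueField R M
  rw [hsmul, moduleLength_eq_coe_length, WithBot.coe_le_coe, WithBot.coe_inj, ← hpi]
  refine ⟨Module.length_le_of_surjective f hf, fun h ↦ ?_, fun _ ↦ ?_⟩
  · exact Module.Free.of_equiv (LinearEquiv.ofBijective f
      ⟨injective_of_surjective_of_length_eq f hf h, hf⟩)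
  · rw [hpi, hn, Module.finrank_baseChange, Module.length_of_free_of_finite, nsmul_eq_mul]
end

section
/- Let R be a commutative local Artinian ring with residue field k, let M and N be free R-modules of the same finite rank h, and let φ : M → N and ψ : N → M be R-linear maps such that the image of ψ equals the kernel of φ and the image of φ equals the kernel of ψ. Set d = dim_k((coker φ) ⊗_R k) and d' = dim_k((coker ψ) ⊗_R k), and assume d + d' = h. Then coker φ and coker ψ are free R-modules, of ranks d and d' respectively. -/
open TensorProduct

/-!
The two cokernels `N / im φ` and `M / im ψ` fit into a short exact sequence
`0 → M / im ψ → N → N / im φ → 0`, the first map being induced by `φ`, since `im ψ = ker φ`.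
By Nakayama (`exists_fin_mkQ_comp_surjective`) there are surjections `R^d → N / im φ` and
`R^d' → M / im ψ`, and these lift to maps `f : R^d → N` and `g : R^d' → M`. As in the horseshoe
lemma, `(x, y) ↦ f x + φ (g y)` is a surjection `R^d × R^d' → N`. Both sides are free of rank
`h = d + d'`, so it is bijective. Its injectivity forces both surjections onto the
cokernels to be injective, which makes them isomorphisms.
-/

/-- Nakayama in lifted form: for `P` finite over a local ring, the quotient `P / Q` is generated by the
classes of `dim_k (k ⊗ P / Q)` elements of `P`. -/
lemma exists_fin_mkQ_comp_surjective {R P : Type*} [CommRing R] [IsLocalRing R]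
    [AddCommGroup P] [Module R P] [Module.Finite R P] (Q : Submodule R P) {d : ℕ}
    (hd : Module.finrank (IsLocalRing.ResidueField R)
      (IsLocalRing.ResidueField R ⊗[R] (P ⧸ Q)) = d) :
    ∃ f : (Fin d → R) →ₗ[R] P, Function.Surjective (Q.mkQ ∘ₗ f) := by
  let b := Module.finBasisOfFinrankEq _ _ hd
  obtain ⟨v, hv⟩ := ((TensorProduct.mk_surjective R (P ⧸ Q) (IsLocalRing.ResidueField R)
    Ideal.Quotient.mk_surjective).comp Q.mkQ_surjective).comp_left b
  refine ⟨Fintype.linearCombination R v, ?_⟩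
  have hspan := IsLocalRing.span_eq_top_of_tmul_eq_basis (fun i => Q.mkQ (v i)) b (congr_fun hv)
  have hcomp : Q.mkQ ∘ₗ Fintype.linearCombination R v =
      Fintype.linearCombination R (fun i => Q.mkQ (v i)) := by
    ext x
    simp
  rw [hcomp, ← LinearMap.range_eq_top, Fintype.range_linearCombination, hspan]

/-- A bijective linear map out of `R^d` exhibits its target as free of rank `d`. -/
lemma free_and_finrank_of_fin_bijective {R C : Type*} [CommRing R] [Nontrivial R]
    [AddCommGroup C] [Module R C] {d : ℕ} (f : (Fin d → R) →ₗ[R] C)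
    (hf : Function.Bijective f) : Module.Free R C ∧ Module.finrank R C = d := by
  let e := LinearEquiv.ofBijective f hf
  exact ⟨Module.Free.of_equiv e, by rw [← e.finrank_eq, Module.finrank_fin_fun]⟩

/-- Let `R` be a commutative local Artinian ring with residue field `k`, let `M`, `N` be
free `R`-modules of the same finite rank `h`, and let `φ : M → N`, `ψ : N → M` be `R`-linear
maps with `im ψ = ker φ` and `im φ = ker ψ`.  If `d = dim_k ((coker φ) ⊗_R k)` and
`d' = dim_k ((coker ψ) ⊗_R k)` satisfy `d + d' = h`, then `coker φ` and `coker ψ` are free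
`R`-modules of ranks `d` and `d'` respectively. -/
theorem coker_free_of_periodic_complex
    (R : Type*) [CommRing R] [IsLocalRing R] [IsArtinianRing R]
    (M N : Type*) [AddCommGroup M] [Module R M] [AddCommGroup N] [Module R N]
    [Module.Free R M] [Module.Finite R M] [Module.Free R N] [Module.Finite R N]
    (h : ℕ) (hM : Module.finrank R M = h) (hN : Module.finrank R N = h)
    (φ : M →ₗ[R] N) (ψ : N →ₗ[R] M)
    (h1 : LinearMap.range ψ = LinearMap.ker φ)
    (h2 : LinearMap.range φ = LinearMap.ker ψ)
    (d d' : ℕ)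
    (hd : Module.finrank (IsLocalRing.ResidueField R)
      (IsLocalRing.ResidueField R ⊗[R] (N ⧸ LinearMap.range φ)) = d)
    (hd' : Module.finrank (IsLocalRing.ResidueField R)
      (IsLocalRing.ResidueField R ⊗[R] (M ⧸ LinearMap.range ψ)) = d')
    (hdd' : d + d' = h) :
    (Module.Free R (N ⧸ LinearMap.range φ) ∧
        Module.finrank R (N ⧸ LinearMap.range φ) = d) ∧
    (Module.Free R (M ⧸ LinearMap.range ψ) ∧
        Module.finrank R (M ⧸ LinearMap.range ψ) = d') := by
  obtain ⟨f, hf⟩ := exists_fin_mkQ_comp_surjective (LinearMap.range φ) hd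
  obtain ⟨g, hg⟩ := exists_fin_mkQ_comp_surjective (LinearMap.range ψ) hd'
  have hsurj : Function.Surjective (f.coprod (φ ∘ₗ g)) := by
    intro n
    obtain ⟨x, hx⟩ := hf (Submodule.Quotient.mk n)
    obtain ⟨m, hm⟩ := (Submodule.Quotient.eq _).1 hx.symm
    obtain ⟨y, hy⟩ := hg (Submodule.Quotient.mk m)
    have hmem := (Submodule.Quotient.eq _).1 hy.symm
    rw [h1, LinearMap.mem_ker, map_sub, sub_eq_zero] at hmem
    refine ⟨(x, y), ?_⟩
    simp only [LinearMap.coprod_apply, LinearMap.comp_apply]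
    rw [← hmem, hm]
    abel
  have hinj : Function.Injective (f.coprod (φ ∘ₗ g)) :=
    (OrzechProperty.bijective_of_surjective_of_finrank_le _ hsurj
      (by simp [Module.finrank_prod, hdd', hN])).1
  rw [injective_iff_map_eq_zero] at hinj
  constructor
  · refine free_and_finrank_of_fin_bijective _ ⟨(injective_iff_map_eq_zero _).2 fun x hx => ?_, hf⟩
    obtain ⟨m, hm⟩ := (Submodule.Quotient.mk_eq_zero _).1 hx
    -- `f x` lies in `im φ = φ (im g)`, so it cancels against some `φ (g y)`.
    obtain ⟨y, hy⟩ := hg (Submodule.Quotient.mk m)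
    have hmem := (Submodule.Quotient.eq _).1 hy.symm
    rw [h1, LinearMap.mem_ker, map_sub, sub_eq_zero] at hmem
    have h0 := hinj (x, -y) (by simp [← hmem, hm])
    exact congrArg Prod.fst h0
  · refine free_and_finrank_of_fin_bijective _ ⟨(injective_iff_map_eq_zero _).2 fun y hy => ?_, hg⟩
    have hmem := (Submodule.Quotient.mk_eq_zero _).1 hy
    rw [h1, LinearMap.mem_ker] at hmem
    have h0 := hinj (0, y) (by simp [hmem])
    exact congrArg Prod.snd h0
end

section
/- For every integer l ≥ 1, the number a_l of tuples (x_1,…,x_l) ∈ K^l with 1 + x_1^{p+1} + ⋯ + x_l^{p+1} = 0 equals p^{2l−1} + (−1)^{l−1} p^{l−1}; that is, a_l = p^{2l−1} + p^{l−1} if l is odd, and a_l = p^{2l−1} − p^{l−1} if l is even. -/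
/-!
The map `x ↦ x ^ (p + 1)` is the norm from `K` to its prime field `{c | c ^ p = c}`. Each nonzero
`c` of the prime field has exactly `p + 1` preimages: `X ^ (p + 1) - c` has at most `p + 1` roots,
there are at most `p - 1` such `c`, and together their fibres must exhaust the
`p ^ 2 - 1 = (p + 1) * (p - 1)` nonzero elements of `K` (`card_norm_fiber`). Splitting off one
coordinate then gives, by induction on `l`, that the number `N_l(c)` of `x ∈ K ^ l` with
`∑ x_i ^ (p + 1) = c` satisfies `p * N_l(c) = p ^ (2 * l) + (-p) ^ l * (p * [c = 0] - 1)` for all `c`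
in the prime field (`card_norm_sum`). The theorem is the case `c = -1`.
-/

/-- `fermatAffineCount p K l` is the number `a_l` of tuples `(x_1, …, x_l) ∈ K^l`
with `1 + x_1^{p+1} + ⋯ + x_l^{p+1} = 0`. -/
noncomputable def fermatAffineCount (p : ℕ) (K : Type*) [Field K] (l : ℕ) : ℕ :=
  Nat.card {x : Fin l → K // 1 + ∑ i, x i ^ (p + 1) = 0}

lemma norm_mem_primeField {p : ℕ} {K : Type*} [Field K] [Fintype K]
    (hK : Fintype.card K = p ^ 2) (x : K) : (x ^ (p + 1)) ^ p = x ^ (p + 1) := by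
  have h : x ^ (p ^ 2) = x := by rw [← hK]; exact FiniteField.pow_card x
  calc (x ^ (p + 1)) ^ p = x ^ (p ^ 2) * x ^ p := by ring
    _ = x ^ (p + 1) := by rw [h]; ring

/-- The fibres of the norm over nonzero elements of the prime field, by the counting argument
`p ^ 2 - 1 = ∑ (fibre sizes) ≤ (p - 1) * (p + 1)`. -/
lemma card_norm_fiber {p : ℕ} (hp : p.Prime) {K : Type*} [Field K] [Fintype K] [DecidableEq K]
    (hK : Fintype.card K = p ^ 2) {c : K} (hc : c ^ p = c) (hc0 : c ≠ 0) :
    (Finset.univ.filter fun x : K => x ^ (p + 1) = c).card = p + 1 := by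
  have hp1 := hp.one_lt
  set S : Finset K := Finset.univ.filter fun d : K => d ^ p = d ∧ d ≠ 0 with hS
  set n : K → ℕ := fun d => (Finset.univ.filter fun x : K => x ^ (p + 1) = d).card with hn
  have hn_le : ∀ d, n d ≤ p + 1 := fun d => by
    have h : (Finset.univ.filter fun x : K => x ^ (p + 1) = d)
        ⊆ (Polynomial.nthRoots (p + 1) d).toFinset := fun x hx => by
      simpa [Polynomial.mem_nthRoots] using hx
    exact (Finset.card_le_card h).trans
      ((Multiset.toFinset_card_le _).trans (Polynomial.card_nthRoots _ _))
  have hS_le : S.card ≤ p - 1 := by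
    have h : S ⊆ (Polynomial.nthRoots (p - 1) (1 : K)).toFinset := fun x hx => by
      simp only [hS, Finset.mem_filter, Finset.mem_univ, true_and] at hx
      rw [Multiset.mem_toFinset, Polynomial.mem_nthRoots (by omega)]
      apply mul_right_cancel₀ hx.2
      rw [← pow_succ, Nat.sub_add_cancel hp1.le, hx.1, one_mul]
    exact (Finset.card_le_card h).trans
      ((Multiset.toFinset_card_le _).trans (Polynomial.card_nthRoots _ _))
  have hsum : (Finset.univ.erase (0 : K)).card = ∑ d ∈ S, n d := by
    rw [Finset.card_eq_sum_card_fiberwise (f := fun x : K => x ^ (p + 1)) (t := S)]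
    · refine Finset.sum_congr rfl fun d hd => ?_
      simp only [hS, Finset.mem_filter, Finset.mem_univ, true_and] at hd
      simp only [hn]
      congr 1
      ext x
      simp only [Finset.mem_filter, Finset.mem_erase, Finset.mem_univ, and_true, true_and,
        and_iff_right_iff_imp]
      rintro h rfl
      exact hd.2 (by simpa using h.symm)
    · intro x hx
      have hx0 : x ≠ 0 := by simpa using hx
      simpa [hS, hx0] using norm_mem_primeField hK x
  rw [Finset.card_erase_of_mem (Finset.mem_univ _), Finset.card_univ, hK] at hsum
  have hcS : c ∈ S := by simp [hS, hc, hc0]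
  by_contra hne
  have hlt : ∑ d ∈ S, n d < ∑ _d ∈ S, (p + 1) :=
    Finset.sum_lt_sum (fun d _ => hn_le d) ⟨c, hcS, lt_of_le_of_ne (hn_le c) hne⟩
  rw [← hsum, Finset.sum_const, smul_eq_mul] at hlt
  have h2 : S.card * (p + 1) ≤ (p - 1) * (p + 1) := Nat.mul_le_mul_right _ hS_le
  have h3 : (p - 1) * (p + 1) = p ^ 2 - 1 := by
    obtain ⟨q, rfl⟩ : ∃ q, p = q + 1 := ⟨p - 1, by omega⟩
    simp only [Nat.add_sub_cancel]
    have : (q + 1) ^ 2 = q * (q + 1 + 1) + 1 := by ring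
    omega
  omega

/-- Multiplying by `p` keeps the formula integral and lets the induction start at `l = 0`. -/
lemma card_norm_sum {p : ℕ} (hp : p.Prime) {K : Type*} [Field K] [Fintype K] [DecidableEq K]
    (hK : Fintype.card K = p ^ 2) (l : ℕ) : ∀ c : K, c ^ p = c →
    (p : ℤ) * (Finset.univ.filter fun x : Fin l → K => ∑ i, x i ^ (p + 1) = c).card
      = (p : ℤ) ^ (2 * l) + (-p : ℤ) ^ l * (p * (if c = 0 then 1 else 0) - 1) := by
  have : Fact p.Prime := ⟨hp⟩
  have : CharP K p := charP_of_card_eq_prime_pow hK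
  induction l with
  | zero =>
    intro c _
    by_cases h : c = 0
    · simp [h]
    · simp [h, Ne.symm h]
  | succ l ih =>
    intro c hc
    have hsplit : (Finset.univ.filter fun x : Fin (l + 1) → K => ∑ i, x i ^ (p + 1) = c).card
        = ∑ y : K, (Finset.univ.filter
            fun x : Fin l → K => ∑ i, x i ^ (p + 1) = c - y ^ (p + 1)).card := by
      simp only [Finset.card_filter]
      rw [← (Fin.consEquiv fun _ => K).sum_comp, Fintype.sum_prod_type]
      refine Finset.sum_congr rfl fun y _ => Finset.sum_congr rfl fun x _ => ?_
      simp [Fin.consEquiv, Fin.sum_univ_succ, eq_sub_iff_add_eq']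
    have hfib : ((Finset.univ.filter fun x : K => x ^ (p + 1) = c).card : ℤ)
        = p + 1 - p * (if c = 0 then 1 else 0) := by
      by_cases h : c = 0
      · subst h
        have : (Finset.univ.filter fun x : K => x ^ (p + 1) = 0) = {0} := by
          ext x; simp
        rw [this]; simp
      · rw [card_norm_fiber hp hK hc h]; simp [h]
    have hind : ∑ y : K, (if c - y ^ (p + 1) = 0 then (1 : ℤ) else 0)
        = p + 1 - p * (if c = 0 then 1 else 0) := by
      rw [← hfib, Finset.card_filter]
      push_cast
      refine Finset.sum_congr rfl fun y _ => ?_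
      simp only [sub_eq_zero, eq_comm (a := c)]
    rw [hsplit, Nat.cast_sum, Finset.mul_sum]
    rw [Finset.sum_congr rfl fun y _ => ih (c - y ^ (p + 1))
      (by rw [sub_pow_char, hc, norm_mem_primeField hK])]
    rw [Finset.sum_add_distrib, ← Finset.mul_sum, Finset.sum_sub_distrib, ← Finset.mul_sum, hind]
    simp only [Finset.sum_const, Finset.card_univ, hK, nsmul_eq_mul]
    push_cast
    ring

/-- Let `p > 2` be a prime and `K` a field with `p^2` elements.  For every `l ≥ 1` the
count `a_l` equals `p^{2l−1} + (−1)^{l−1} p^{l−1}`; that is, `a_l = p^{2l−1} + p^{l−1}`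
if `l` is odd and `a_l = p^{2l−1} − p^{l−1}` if `l` is even. -/
theorem fermatAffineCount_eq
    (p : ℕ) (hp : p.Prime) (hp2 : 2 < p)
    (K : Type*) [Field K] [Fintype K] (hK : Fintype.card K = p ^ 2)
    (l : ℕ) (hl : 1 ≤ l) :
    (fermatAffineCount p K l : ℤ) =
        (p : ℤ) ^ (2 * l - 1) + (-1) ^ (l - 1) * (p : ℤ) ^ (l - 1) ∧
    (Odd l → fermatAffineCount p K l = p ^ (2 * l - 1) + p ^ (l - 1)) ∧
    (Even l → fermatAffineCount p K l = p ^ (2 * l - 1) - p ^ (l - 1)) := by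
  classical
  have hodd : Odd p := hp.odd_of_ne_two (by omega)
  have hp0 : (p : ℤ) ≠ 0 := by exact_mod_cast hp.ne_zero
  obtain ⟨m, rfl⟩ : ∃ m, l = m + 1 := ⟨l - 1, by omega⟩
  have hcount : fermatAffineCount p K (m + 1)
      = (Finset.univ.filter fun x : Fin (m + 1) → K => ∑ i, x i ^ (p + 1) = -1).card := by
    rw [fermatAffineCount, Nat.card_eq_fintype_card, Fintype.card_subtype]
    congr 1
    ext x
    simp only [Finset.mem_filter, Finset.mem_univ, true_and]
    rw [add_comm, add_eq_zero_iff_eq_neg]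
  have h := card_norm_sum hp hK (m + 1) (-1) hodd.neg_one_pow
  rw [← hcount] at h
  have e : 2 * (m + 1) - 1 = 2 * m + 1 := by omega
  have main : (fermatAffineCount p K (m + 1) : ℤ)
      = (p : ℤ) ^ (2 * m + 1) + (-1) ^ m * (p : ℤ) ^ m := by
    apply mul_left_cancel₀ hp0
    rw [h, neg_pow]
    simp
    ring
  rw [e, Nat.add_sub_cancel]
  refine ⟨main, fun ho => ?_, fun he => ?_⟩
  · have hm : Even m := by simpa [Nat.odd_add_one] using ho
    rw [hm.neg_one_pow, one_mul] at main
    exact_mod_cast main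
  · have hm : Odd m := by simpa [Nat.even_add_one] using he
    rw [hm.neg_one_pow] at main
    have : (fermatAffineCount p K (m + 1) : ℤ) + (p : ℤ) ^ m = (p : ℤ) ^ (2 * m + 1) := by
      rw [main]; ring
    have : fermatAffineCount p K (m + 1) + p ^ m = p ^ (2 * m + 1) := by exact_mod_cast this
    omega
end

section
/- For every integer l ≥ 2, the counts a_l satisfy the recursion a_l + p·a_{l−1} = (p+1)·p^{2(l−1)}. -/
/-- The fibres of the norm `z ↦ z ^ (p + 1)` over the prime field `{y | y ^ p = y}`. -/
lemma card_norm_fibre (p : ℕ) (hp : p.Prime) (K : Type*) [Field K] [Fintype K] [DecidableEq K]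
    (hK : Fintype.card K = p ^ 2) (y : K) (hy : y ^ p = y) :
    Nat.card {z : K // z ^ (p + 1) = y} + (if y = 0 then p else 0) = p + 1 := by
  by_cases h0 : y = 0
  · subst h0
    have : Nat.card {z : K // z ^ (p + 1) = 0} = 1 := by
      rw [Nat.card_eq_one_iff_unique]
      refine ⟨⟨fun a b => Subtype.ext ?_⟩, ⟨0, by simp⟩⟩
      rw [eq_zero_of_pow_eq_zero a.2, eq_zero_of_pow_eq_zero b.2]
    rw [this]; simp [add_comm]
  · simp only [h0, if_false, add_zero]
    obtain ⟨g, hg⟩ := IsCyclic.exists_generator (α := Kˣ)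
    have hp1 : 0 < p - 1 := by have := hp.two_le; omega
    have hfac : p ^ 2 - 1 = (p - 1) * (p + 1) := by
      have := Nat.sq_sub_sq p 1
      rw [one_pow] at this
      rw [this, mul_comm]
    have hord : orderOf g = (p - 1) * (p + 1) := by
      rw [orderOf_eq_card_of_forall_mem_zpowers hg, Nat.card_eq_fintype_card, Fintype.card_units,
        hK, hfac]
    have hprim : IsPrimitiveRoot ((g : K) ^ (p - 1)) (p + 1) := by
      have h1 : IsPrimitiveRoot (g : K) ((p - 1) * (p + 1)) := by
        rw [← hord, ← orderOf_units]
        exact IsPrimitiveRoot.orderOf _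
      exact h1.pow (by positivity) rfl
    -- `y = g ^ k` with `y ^ (p - 1) = 1` forces `p + 1 ∣ k`, so `y` is a norm.
    have hex : ∃ α : K, α ^ (p + 1) = y := by
      obtain ⟨k, hk⟩ := (Submonoid.mem_powers_iff _ _).1
        (mem_powers_iff_mem_zpowers.2 (hg (Units.mk0 y h0)))
      have hy1 : y ^ (p - 1) = 1 := by
        apply mul_right_cancel₀ h0
        rw [← pow_succ, Nat.sub_add_cancel hp.one_le, hy, one_mul]
      have hk1 : g ^ (k * (p - 1)) = 1 := by
        rw [pow_mul, hk]; ext; simpa using hy1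
      have hd := orderOf_dvd_of_pow_eq_one hk1
      rw [hord, mul_comm k] at hd
      obtain ⟨m, rfl⟩ := Nat.dvd_of_mul_dvd_mul_left hp1 hd
      refine ⟨(g : K) ^ m, ?_⟩
      have := congrArg Units.val hk
      rw [← pow_mul, mul_comm m]
      simpa using this
    have hc := hprim.card_nthRoots y
    rw [if_pos hex] at hc
    rw [← Multiset.toFinset_card_of_nodup (hprim.nthRoots_nodup h0)] at hc
    rw [Nat.card_eq_fintype_card]
    refine (Fintype.card_of_subtype _ fun z => ?_).trans hc
    rw [Multiset.mem_toFinset, Polynomial.mem_nthRoots (Nat.succ_pos p)]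

/-- Splitting off the first coordinate of a solution. -/
def fermatFibration (p : ℕ) (K : Type*) [Field K] (n : ℕ) :
    {x : Fin (n + 1) → K // 1 + ∑ i, x i ^ (p + 1) = 0} ≃
      Σ x : Fin n → K, {z : K // z ^ (p + 1) = -(1 + ∑ i, x i ^ (p + 1))} where
  toFun x := ⟨fun i => x.1 i.succ, x.1 0, by
    have := x.2
    rw [Fin.sum_univ_succ] at this
    linear_combination this⟩
  invFun s := ⟨Fin.cons s.2.1 s.1, by
    rw [Fin.sum_univ_succ]
    simp only [Fin.cons_zero, Fin.cons_succ]
    linear_combination s.2.2⟩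
  left_inv x := Subtype.ext (Fin.cons_self_tail x.1)
  right_inv s := rfl

/-- Let `p > 2` be a prime and `K` a field with `p^2` elements.  For every `l ≥ 2` the
counts `a_l` satisfy the recursion `a_l + p · a_{l−1} = (p+1) · p^{2(l−1)}`. -/
theorem fermatAffineCount_recursion
    (p : ℕ) (hp : p.Prime) (hp2 : 2 < p)
    (K : Type*) [Field K] [Fintype K] (hK : Fintype.card K = p ^ 2)
    (l : ℕ) (hl : 2 ≤ l) :
    fermatAffineCount p K l + p * fermatAffineCount p K (l - 1) =
      (p + 1) * p ^ (2 * (l - 1)) := by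
  classical
  obtain ⟨n, rfl⟩ : ∃ n, l = n + 1 := ⟨l - 1, by omega⟩
  rw [Nat.add_sub_cancel]
  have : Fact p.Prime := ⟨hp⟩
  have : CharP K p := charP_of_card_eq_prime_pow hK
  have hfix (x : Fin n → K) :
      (-(1 + ∑ i, x i ^ (p + 1))) ^ p = -(1 + ∑ i, x i ^ (p + 1)) := by
    have hz (z : K) : (z ^ (p + 1)) ^ p = z ^ (p + 1) := by
      have h := FiniteField.pow_card z
      rw [hK] at h
      calc (z ^ (p + 1)) ^ p = z ^ p ^ 2 * z ^ p := by ring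
        _ = z ^ (p + 1) := by rw [h]; ring
    rw [(hp.odd_of_ne_two (by omega)).neg_pow, add_pow_char, one_pow, sum_pow_char]
    simp only [hz]
  have hfib (x : Fin n → K) := card_norm_fibre p hp K hK _ (hfix x)
  have hb : p * fermatAffineCount p K n =
      ∑ x : Fin n → K, if -(1 + ∑ i, x i ^ (p + 1)) = 0 then p else 0 := by
    simp only [neg_eq_zero]
    rw [fermatAffineCount, Nat.card_eq_fintype_card, Fintype.card_subtype, ← Finset.sum_filter,
      Finset.sum_const, smul_eq_mul, mul_comm]
  rw [hb, fermatAffineCount, Nat.card_congr (fermatFibration p K n), Nat.card_sigma,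
    ← Finset.sum_add_distrib, Finset.sum_congr rfl fun x _ => hfib x, Finset.sum_const,
    Finset.card_univ, Fintype.card_fun, Fintype.card_fin, hK, smul_eq_mul, ← pow_mul, mul_comm]
end

section
/- ν(2,3) = p^3 + 1: the number of 2-dimensional K-subspaces U of the standard hermitian space K^3 satisfying U^⊥ ⊆ U equals p^3 + 1. -/
/-!
A plane `U ⊆ K^3` is `w^⊥` for a nonzero `w`, unique up to scalars, and then `U^⊥ = K w`; hence
`U^⊥ ⊆ U` holds exactly when `w` is isotropic, and the planes in question correspond to the
isotropic points of the projective plane. Each such point has a unique representative of the form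
`(1, b, c)` or `(0, 1, c)`, the point `(0 : 0 : 1)` being anisotropic.

Write `N(x) = x^(p+1)` for the norm. As `Kˣ` is cyclic of order `p^2 - 1`, every nonzero element
of the prime field has exactly `p + 1` preimages under `N` (`card_norm_eq`). So `N(c) = -1` has
`p + 1` solutions, and for `1 + N(b) + N(c) = 0` the `p + 1` values `b` with `N(b) = -1` allow only
`c = 0`, while each of the other `p^2 - p - 1` values allows `p + 1` values of `c`. The total is
`(p + 1) + (p + 1) + (p^2 - p - 1) (p + 1) = p^3 + 1`.
-/

/-- The orthogonal complement `U^⊥` of a subspace `U ⊆ K^l` with respect to the standard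
hermitian form `h(x, y) = Σ_i x_i · y_i^p` (where `x ↦ x^p` is the Frobenius of the field
`K` with `p^2` elements over its prime field). -/
def hermitianPerp (p : ℕ) {K : Type*} [Field K] {l : ℕ}
    (U : Submodule K (Fin l → K)) : Submodule K (Fin l → K) where
  carrier := {v | ∀ u ∈ U, ∑ i, v i * u i ^ p = 0}
  zero_mem' := by
    intro u hu
    simp
  add_mem' := by
    intro a b ha hb u hu
    have := ha u hu
    have := hb u hu
    simp only [Pi.add_apply, add_mul, Finset.sum_add_distrib]
    simp [ha u hu, hb u hu]
  smul_mem' := by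
    intro c v hv u hu
    simp only [Pi.smul_apply, smul_eq_mul, mul_assoc, ← Finset.mul_sum]
    simp [hv u hu]

/-- `hermitianNu p K r l` is the number `ν(r, l)` of `r`-dimensional `K`-subspaces `U` of
the standard hermitian space `K^l` satisfying `U^⊥ ⊆ U`. -/
noncomputable def hermitianNu (p : ℕ) (K : Type*) [Field K] (r l : ℕ) : ℕ :=
  Nat.card {U : Submodule K (Fin l → K) //
    Module.finrank K U = r ∧ hermitianPerp p U ≤ U}

section HermitianCount

variable {p : ℕ} {K : Type*} [Field K]

/-- The norm `x ↦ x^(p+1)` of `K` over its prime field takes each nonzero value in the prime field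
exactly `p + 1` times. -/
theorem card_norm_eq [Fintype K] (hp : p.Prime) (hK : Fintype.card K = p ^ 2) (a : K) (ha : a ≠ 0)
    (hap : a ^ p = a) : Nat.card {c : K // c ^ (p + 1) = a} = p + 1 := by
  classical
  obtain ⟨g, hg⟩ := IsCyclic.exists_generator (α := Kˣ)
  obtain ⟨q, rfl⟩ : ∃ q, p = q + 1 := ⟨p - 1, by have := hp.pos; omega⟩
  have hq : 0 < q := by have := hp.two_le; omega
  have hcard : orderOf g = q * (q + 1 + 1) := by
    rw [orderOf_eq_card_of_forall_mem_zpowers hg, Nat.card_eq_fintype_card, Fintype.card_units, hK]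
    exact Nat.sub_eq_of_eq_add (by ring)
  have hgprim : IsPrimitiveRoot (g : K) (q * (q + 1 + 1)) := by
    rw [IsPrimitiveRoot.coe_units_iff, ← hcard]
    exact IsPrimitiveRoot.orderOf g
  have hζ : IsPrimitiveRoot ((g : K) ^ q) (q + 1 + 1) :=
    hgprim.pow (by positivity) rfl
  have hroot : ∃ α : K, α ^ (q + 1 + 1) = a := by
    have ha1 : a ^ q = 1 := by
      rw [pow_succ] at hap
      exact mul_right_cancel₀ ha (by rw [hap, one_mul])
    have : NeZero (q * (q + 1 + 1)) := ⟨by positivity⟩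
    obtain ⟨k, hk, hka⟩ := hgprim.eq_pow_of_pow_eq_one
      (ξ := a) (by rw [pow_mul, ha1, one_pow])
    have hdvd : q * (q + 1 + 1) ∣ q * k := by
      rw [← hgprim.pow_eq_one_iff_dvd, mul_comm, pow_mul, hka, ha1]
    obtain ⟨m, rfl⟩ := Nat.dvd_of_mul_dvd_mul_left hq hdvd
    exact ⟨(g : K) ^ m, by rw [← pow_mul, mul_comm, hka]⟩
  have h1 := hζ.card_nthRoots a
  rw [if_pos hroot] at h1
  rw [← Multiset.toFinset_card_of_nodup (hζ.nthRoots_nodup ha)] at h1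
  rw [Nat.card_eq_fintype_card]
  refine (Fintype.card_of_subtype _ fun x => ?_).trans h1
  rw [Multiset.mem_toFinset, Polynomial.mem_nthRoots (Nat.succ_pos _)]

/-- Normalized representatives of the points of the projective plane other than `(0 : 0 : 1)`. -/
def normRep (s : (K × K) ⊕ K) : Fin 3 → K :=
  Sum.elim (fun bc => ![1, bc.1, bc.2]) (fun c => ![0, 1, c]) s

/-- The hermitian square `h(w, w)`. -/
def hermSq (p : ℕ) (w : Fin 3 → K) : K := ∑ i, w i * w i ^ p

theorem card_isotropic [Fintype K] (hp : p.Prime) (hp2 : 2 < p) (hK : Fintype.card K = p ^ 2) :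
    Nat.card {s : (K × K) ⊕ K // hermSq p (normRep s) = 0} = p ^ 3 + 1 := by
  classical
  have : Fact p.Prime := ⟨hp⟩
  have : CharP K p := charP_of_card_eq_prime_pow hK
  have hodd : Odd p := hp.odd_of_ne_two hp2.ne'
  have hfix : ∀ x : K, (x ^ (p + 1)) ^ p = x ^ (p + 1) := by
    intro x
    have hx : x ^ p ^ 2 = x := by rw [← hK]; exact FiniteField.pow_card x
    calc (x ^ (p + 1)) ^ p = x ^ p ^ 2 * x ^ p := by ring
      _ = x ^ (p + 1) := by rw [hx]; ring
  have hneg : Nat.card {c : K // c ^ (p + 1) = -1} = p + 1 :=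
    card_norm_eq hp hK _ (neg_ne_zero.mpr one_ne_zero) hodd.neg_one_pow
  have e1 : {s : (K × K) ⊕ K // hermSq p (normRep s) = 0} ≃
      (Σ b : K, {c : K // c ^ (p + 1) = -1 - b ^ (p + 1)}) ⊕ {c : K // c ^ (p + 1) = -1} := by
    refine Equiv.subtypeSum.trans (Equiv.sumCongr
      (Equiv.trans (Equiv.subtypeEquivRight ?_) (Equiv.subtypeProdEquivSigmaSubtype
        fun b c : K => c ^ (p + 1) = -1 - b ^ (p + 1))) (Equiv.subtypeEquivRight ?_))
    · rintro ⟨b, c⟩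
      simp only [hermSq, normRep, Fin.sum_univ_three, Sum.elim_inl, Matrix.cons_val,
        one_pow, mul_one]
      rw [← pow_succ', ← pow_succ']
      constructor <;> intro h <;> linear_combination h
    · intro c
      simp only [hermSq, normRep, Fin.sum_univ_three, Sum.elim_inr, Matrix.cons_val,
        one_pow, mul_one, zero_mul, zero_add]
      rw [← pow_succ']
      constructor <;> intro h <;> linear_combination h
  have hfib : ∀ b : K, Nat.card {c : K // c ^ (p + 1) = -1 - b ^ (p + 1)} =
      if b ^ (p + 1) = -1 then 1 else p + 1 := by
    intro b
    split_ifs with hb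
    · rw [hb, sub_self, Nat.card_eq_one_iff_unique]
      exact ⟨⟨fun x y => Subtype.ext ((pow_eq_zero_iff (Nat.succ_ne_zero p)).mp x.2 |>.trans
        ((pow_eq_zero_iff (Nat.succ_ne_zero p)).mp y.2).symm)⟩, ⟨0, by simp⟩⟩
    · refine card_norm_eq hp hK _ (fun h => hb (by linear_combination -h)) ?_
      rw [sub_pow_char, hodd.neg_one_pow, hfix]
  rw [Nat.card_congr e1, Nat.card_sum, Nat.card_sigma, hneg, Finset.sum_congr rfl fun b _ => hfib b,
    Finset.sum_ite, Finset.sum_const, Finset.sum_const]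
  have hA : (Finset.univ.filter fun b : K => b ^ (p + 1) = -1).card = p + 1 := by
    rwa [Nat.card_eq_fintype_card, Fintype.card_subtype] at hneg
  have hB := Finset.card_filter_add_card_filter_not (s := (Finset.univ : Finset K))
    (fun b : K => b ^ (p + 1) = -1)
  rw [hA, Finset.card_univ, hK] at hB
  rw [hA, smul_eq_mul, smul_eq_mul, mul_one]
  zify at hB ⊢
  linear_combination ((p : ℤ) + 1) * hB

/-- The linear functional `x ↦ h(x, w)`. -/
def hermFunctional (p : ℕ) (w : Fin 3 → K) : (Fin 3 → K) →ₗ[K] K :=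
  ∑ i, (w i ^ p) • LinearMap.proj i

theorem hermFunctional_apply (w x : Fin 3 → K) :
    hermFunctional p w x = x 0 * w 0 ^ p + x 1 * w 1 ^ p + x 2 * w 2 ^ p := by
  simp [hermFunctional, Fin.sum_univ_three, mul_comm]

theorem mem_hermitianPerp_three (U : Submodule K (Fin 3 → K)) (v : Fin 3 → K) :
    v ∈ hermitianPerp p U ↔
      ∀ u ∈ U, v 0 * u 0 ^ p + v 1 * u 1 ^ p + v 2 * u 2 ^ p = 0 := by
  change (∀ u ∈ U, ∑ i, v i * u i ^ p = 0) ↔ _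
  simp only [Fin.sum_univ_three]

theorem finrank_ker_functional (φ : (Fin 3 → K) →ₗ[K] K) (hφ : φ ≠ 0) :
    Module.finrank K (LinearMap.ker φ) = 2 := by
  have h := φ.finrank_range_add_finrank_ker
  rw [LinearMap.range_eq_top.mpr (LinearMap.surjective hφ), finrank_top, Module.finrank_self,
    Module.finrank_fin_fun] at h
  omega

theorem hermFunctional_normRep_ne_zero (s : (K × K) ⊕ K) :
    hermFunctional p (normRep s) ≠ 0 := by
  intro h
  rcases s with ⟨b, c⟩ | c
  · have := LinearMap.congr_fun h ![1, 0, 0]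
    simp [hermFunctional_apply, normRep] at this
  · have := LinearMap.congr_fun h ![0, 1, 0]
    simp [hermFunctional_apply, normRep] at this

/-- The orthogonal complement of the plane `w^⊥` is the line spanned by `w`, which lies in `w^⊥`
when `w` is isotropic. -/
theorem perp_ker_le [Fintype K] (hp2 : 2 < p) (hp : p.Prime)
    (hK : Fintype.card K = p ^ 2) (s : (K × K) ⊕ K) (hs : hermSq p (normRep s) = 0) :
    hermitianPerp p (LinearMap.ker (hermFunctional p (normRep s))) ≤
      LinearMap.ker (hermFunctional p (normRep s)) := by
  have hodd : Odd p := hp.odd_of_ne_two hp2.ne'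
  have hp0 : p ≠ 0 := hp.ne_zero
  have hpp : ∀ x : K, (x ^ p) ^ p = x := fun x => by
    rw [← pow_mul, ← sq, ← hK]; exact FiniteField.pow_card x
  intro v hv
  rw [mem_hermitianPerp_three] at hv
  rw [LinearMap.mem_ker, hermFunctional_apply]
  rcases s with ⟨b, c⟩ | c
  · have h1 := hv ![-b ^ p, 1, 0] (by simp [hermFunctional_apply, normRep])
    have h2 := hv ![-c ^ p, 0, 1] (by simp [hermFunctional_apply, normRep])
    simp [hodd.neg_pow, hpp, hp0] at h1 h2
    simp [hermSq, normRep, Fin.sum_univ_three] at hs ⊢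
    linear_combination v 0 * hs + b ^ p * h1 + c ^ p * h2
  · have h1 := hv ![1, 0, 0] (by simp [hermFunctional_apply, normRep, hp0])
    have h2 := hv ![0, -c ^ p, 1] (by simp [hermFunctional_apply, normRep])
    simp [hodd.neg_pow, hpp, hp0] at h1 h2
    simp [hermSq, normRep, Fin.sum_univ_three, hp0] at hs ⊢
    linear_combination v 1 * hs + c ^ p * h2

theorem normRep_ker_injective [Fintype K] (hp : p.Prime) (hK : Fintype.card K = p ^ 2) :
    Function.Injective fun s : (K × K) ⊕ K =>
      LinearMap.ker (hermFunctional p (normRep s)) := by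
  have hp0 : p ≠ 0 := hp.ne_zero
  have hpp : ∀ x : K, (x ^ p) ^ p = x := fun x => by
    rw [← pow_mul, ← sq, ← hK]; exact FiniteField.pow_card x
  have hinj : ∀ x y : K, x ^ p = y ^ p → x = y := fun x y h => by rw [← hpp x, h, hpp]
  intro s t hst
  have key : ∀ x, hermFunctional p (normRep s) x = 0 ↔ hermFunctional p (normRep t) x = 0 :=
    fun x => by
      rw [← LinearMap.mem_ker, ← LinearMap.mem_ker]
      exact iff_of_eq (congrArg (x ∈ ·) hst)
  simp only [hermFunctional_apply] at key
  rcases s with ⟨b, c⟩ | c <;> rcases t with ⟨b', c'⟩ | c'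
  · have h1 := (key ![-b ^ p, 1, 0]).mp (by simp [normRep])
    have h2 := (key ![-c ^ p, 0, 1]).mp (by simp [normRep])
    simp [normRep] at h1 h2
    rw [hinj b b' (by linear_combination -h1), hinj c c' (by linear_combination -h2)]
  · have h1 := (key ![-b ^ p, 1, 0]).mp (by simp [normRep])
    simp [normRep, hp0] at h1
  · have h1 := (key ![-b' ^ p, 1, 0]).mpr (by simp [normRep])
    simp [normRep, hp0] at h1
  · have h1 := (key ![0, -c ^ p, 1]).mp (by simp [normRep])
    simp [normRep] at h1
    rw [hinj c c' (by linear_combination -h1)]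

/-- A nonzero isotropic vector is a scalar multiple of a normalized one. -/
theorem exists_normRep (hp : p.Prime) (w : Fin 3 → K) (hw : w ≠ 0) (hiso : hermSq p w = 0) :
    ∃ (s : (K × K) ⊕ K) (d : K), d ≠ 0 ∧ w = d • normRep s := by
  have hp0 : p ≠ 0 := hp.ne_zero
  by_cases h0 : w 0 = 0
  · have h1 : w 1 ≠ 0 := by
      intro h1
      have h2 : w 2 = 0 := by simpa [hermSq, Fin.sum_univ_three, h0, h1, hp0] using hiso
      exact hw (by ext i; fin_cases i <;> assumption)
    refine ⟨Sum.inr (w 2 / w 1), w 1, h1, ?_⟩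
    ext i; fin_cases i <;> simp [normRep, h0]
    field_simp
  · refine ⟨Sum.inl (w 1 / w 0, w 2 / w 0), w 0, h0, ?_⟩
    ext i; fin_cases i <;> simp [normRep] <;> field_simp

theorem exists_normRep_of_perp_le [Fintype K] (hp : p.Prime) (hK : Fintype.card K = p ^ 2)
    (U : Submodule K (Fin 3 → K)) (hU : Module.finrank K U = 2) (hperp : hermitianPerp p U ≤ U) :
    ∃ s : (K × K) ⊕ K, hermSq p (normRep s) = 0 ∧
      LinearMap.ker (hermFunctional p (normRep s)) = U := by
  have : Fact p.Prime := ⟨hp⟩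
  have : CharP K p := charP_of_card_eq_prime_pow hK
  have hp0 : p ≠ 0 := hp.ne_zero
  have hpp : ∀ x : K, (x ^ p) ^ p = x := fun x => by
    rw [← pow_mul, ← sq, ← hK]; exact FiniteField.pow_card x
  have hlt : U < ⊤ := by
    rw [lt_top_iff_ne_top]
    rintro rfl
    rw [finrank_top, Module.finrank_fin_fun] at hU
    omega
  obtain ⟨φ, hφ, hle⟩ := Submodule.exists_le_ker_of_lt_top U hlt
  -- The Frobenius is an involution, so `φ` is represented by the `p`-th powers of its coefficients.
  let w : Fin 3 → K := fun i => φ (Pi.single i 1) ^ p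
  have hφw : hermFunctional p w = φ := by
    refine LinearMap.pi_ext' fun i => LinearMap.ext_ring ?_
    fin_cases i <;> simp [hermFunctional_apply, w, hpp]
  have hUker : U = LinearMap.ker φ :=
    Submodule.eq_of_le_of_finrank_eq hle (by rw [hU, finrank_ker_functional φ hφ])
  have hwU : w ∈ U := by
    refine hperp ((mem_hermitianPerp_three U w).mpr fun u hu => ?_)
    have hu' : hermFunctional p w u = 0 := by rw [hφw]; exact hle hu
    rw [hermFunctional_apply] at hu'
    have := congrArg (· ^ p) hu'
    simp only [add_pow_char, mul_pow, hpp, zero_pow hp0] at this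
    linear_combination this
  have hiso : hermSq p w = 0 := by
    have hw' : hermFunctional p w w = 0 := by rw [hφw]; exact hle hwU
    rw [hermFunctional_apply] at hw'
    rw [hermSq, Fin.sum_univ_three, hw']
  have hw0 : w ≠ 0 := by
    intro h
    apply hφ
    rw [← hφw, h]
    ext
    simp [hermFunctional_apply, hp0]
  obtain ⟨s, d, hd, hwd⟩ := exists_normRep hp w hw0 hiso
  refine ⟨s, ?_, ?_⟩
  · have h : hermSq p w = d * d ^ p * hermSq p (normRep s) := by
      rw [hwd]
      simp only [hermSq, Pi.smul_apply, smul_eq_mul, mul_pow, Finset.mul_sum]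
      exact Finset.sum_congr rfl fun i _ => by ring
    rw [hiso] at h
    exact (mul_eq_zero.mp h.symm).resolve_left (mul_ne_zero hd (pow_ne_zero _ hd))
  · have h : hermFunctional p w = d ^ p • hermFunctional p (normRep s) := by
      ext
      simp only [hwd, hermFunctional_apply, LinearMap.comp_apply, LinearMap.smul_apply,
        Pi.smul_apply, smul_eq_mul, mul_pow]
      ring
    rw [hUker, ← hφw, h, LinearMap.ker_smul _ _ (pow_ne_zero _ hd)]

end HermitianCount

/-- Let `p > 2` be a prime and `K` a field with `p^2` elements.  The number of
`2`-dimensional subspaces `U` of the standard hermitian space `K^3` with `U^⊥ ⊆ U`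
equals `p^3 + 1`. -/
theorem hermitianNu_two_three
    (p : ℕ) (hp : p.Prime) (hp2 : 2 < p)
    (K : Type*) [Field K] [Fintype K] (hK : Fintype.card K = p ^ 2) :
    hermitianNu p K 2 3 = p ^ 3 + 1 := by
  let f : {s : (K × K) ⊕ K // hermSq p (normRep s) = 0} →
      {U : Submodule K (Fin 3 → K) // Module.finrank K U = 2 ∧ hermitianPerp p U ≤ U} :=
    fun s => ⟨LinearMap.ker (hermFunctional p (normRep s.1)),
      finrank_ker_functional _ (hermFunctional_normRep_ne_zero s.1),
      perp_ker_le hp2 hp hK s.1 s.2⟩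
  have hf : Function.Bijective f := by
    refine ⟨fun s t hst => Subtype.ext (normRep_ker_injective hp hK (congrArg Subtype.val hst)), ?_⟩
    rintro ⟨U, hU, hperp⟩
    obtain ⟨s, hs, hsU⟩ := exists_normRep_of_perp_le hp hK U hU hperp
    exact ⟨⟨s, hs⟩, Subtype.ext hsU⟩
  rw [hermitianNu, ← Nat.card_congr (Equiv.ofBijective f hf), card_isotropic hp hp2 hK]
end

section
/- For every integer l ≥ 2, ν(l−1, l) = (p^l + 1)·Σ_{l−1} if l is odd, and ν(l−1, l) = (p^{l−1} + 1)·Σ_{l−1} if l is even; here Σ_{l−1} = Σ_{j=0}^{⌊(l−2)/2⌋} p^{2j}. In other words, the number of (l−1)-dimensional subspaces U of the standard hermitian space K^l with U^⊥ ⊆ U is given by these closed formulas. -/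
/-- The functional `x ↦ h(x, v) = Σ x_i v_i^p` on `K^l`. -/
def hermitianFunctional (p : ℕ) {K : Type*} [Field K] {l : ℕ} (v : Fin l → K) :
    (Fin l → K) →ₗ[K] K :=
  ∑ i, (v i ^ p) • LinearMap.proj i

lemma hermitianFunctional_apply (p : ℕ) {K : Type*} [Field K] {l : ℕ} (v x : Fin l → K) :
    hermitianFunctional p v x = ∑ i, x i * v i ^ p := by
  simp [hermitianFunctional, LinearMap.sum_apply, mul_comm]

/-! ### Hyperplanes and isotropic vectors -/

lemma charP_of_card_sq {p : ℕ} (hp : p.Prime) {K : Type*} [Field K] [Fintype K]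
    (hK : Fintype.card K = p ^ 2) : CharP K p := by
  have := Fact.mk hp
  exact charP_of_card_eq_prime_pow hK

lemma pow_p_pow_p {p : ℕ} {K : Type*} [Field K] [Fintype K]
    (hK : Fintype.card K = p ^ 2)
    (x : K) : (x ^ p) ^ p = x := by
  rw [← pow_mul, ← sq, ← hK, FiniteField.pow_card]

lemma sum_pow_p {p : ℕ} (hp : p.Prime) {K : Type*} [Field K] [Fintype K]
    (hK : Fintype.card K = p ^ 2)
    {ι : Type*} (s : Finset ι) (f : ι → K) :
    (∑ i ∈ s, f i) ^ p = ∑ i ∈ s, f i ^ p := by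
  have := Fact.mk hp
  have := charP_of_card_sq hp hK
  exact sum_pow_char p s f

/-- The form `h` is hermitian: `h(x, v)^p = h(v, x)`. -/
lemma hermitian_symm {p : ℕ} (hp : p.Prime) {K : Type*} [Field K] [Fintype K]
    (hK : Fintype.card K = p ^ 2)
    {l : ℕ} (v x : Fin l → K) :
    (∑ i, x i * v i ^ p) ^ p = ∑ i, v i * x i ^ p := by
  rw [sum_pow_p hp hK]
  refine Finset.sum_congr rfl fun i _ => ?_
  rw [mul_pow, pow_p_pow_p hK, mul_comm]

lemma hermitian_eq_zero_symm {p : ℕ} (hp : p.Prime) {K : Type*} [Field K] [Fintype K]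
    (hK : Fintype.card K = p ^ 2)
    {l : ℕ} (v x : Fin l → K) :
    ∑ i, x i * v i ^ p = 0 ↔ ∑ i, v i * x i ^ p = 0 := by
  rw [← hermitian_symm hp hK v x, pow_eq_zero_iff hp.ne_zero]

lemma exists_hermitianFunctional_eq {p : ℕ} {K : Type*} [Field K] [Fintype K]
    (hK : Fintype.card K = p ^ 2)
    {l : ℕ} (f : (Fin l → K) →ₗ[K] K) :
    ∃ v, hermitianFunctional p v = f := by
  classical
  refine ⟨fun i => f (Pi.single i 1) ^ p, ?_⟩
  refine LinearMap.pi_ext' fun i => LinearMap.ext_ring ?_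
  simp [hermitianFunctional_apply, Pi.single_apply, pow_p_pow_p hK]

lemma hermitianFunctional_ne_zero {p : ℕ} (hp : p.Prime) {K : Type*} [Field K]
    {l : ℕ} {v : Fin l → K} (hv : v ≠ 0) :
    hermitianFunctional p v ≠ 0 := by
  classical
  intro h
  refine hv (funext fun i => ?_)
  have := LinearMap.congr_fun h (Pi.single i 1)
  simpa [hermitianFunctional_apply, Pi.single_apply, hp.ne_zero] using this

lemma finrank_ker_hermitianFunctional {p : ℕ} {K : Type*} [Field K]
    (hp : p.Prime) {l : ℕ} {v : Fin l → K} (hv : v ≠ 0) :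
    Module.finrank K (LinearMap.ker (hermitianFunctional p v)) = l - 1 := by
  have := Module.Dual.finrank_ker_add_one_of_ne_zero (hermitianFunctional_ne_zero hp hv)
  rw [Module.finrank_fin_fun] at this
  omega

/-- A vector is determined by its orthogonal hyperplane up to a scalar. -/
lemma exists_smul_of_ker_le {p : ℕ} {K : Type*} [Field K] [Fintype K]
    (hK : Fintype.card K = p ^ 2)
    {l : ℕ} {v w : Fin l → K}
    (h : LinearMap.ker (hermitianFunctional p v) ≤ LinearMap.ker (hermitianFunctional p w)) :
    ∃ c : K, w = c • v := by
  classical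
  have hmem := mem_span_of_iInf_ker_le_ker (ι := Unit) (L := fun _ => hermitianFunctional p v)
    (K := hermitianFunctional p w) (by simpa using h)
  rw [Set.range_const, Submodule.mem_span_singleton] at hmem
  obtain ⟨c, hc⟩ := hmem
  refine ⟨c ^ p, funext fun i => ?_⟩
  have := LinearMap.congr_fun hc (Pi.single i 1)
  simp [hermitianFunctional_apply, Pi.single_apply] at this
  rw [Pi.smul_apply, smul_eq_mul, ← pow_p_pow_p hK (w i), ← this, mul_pow, pow_p_pow_p hK]

/-- The hyperplane `v^⊥` contains its orthogonal complement, the line through `v`, if and only if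
`v` is isotropic. -/
lemma perp_ker_le_iff {p : ℕ} (hp : p.Prime) {K : Type*} [Field K] [Fintype K]
    (hK : Fintype.card K = p ^ 2)
    {l : ℕ} (v : Fin l → K) :
    hermitianPerp p (LinearMap.ker (hermitianFunctional p v)) ≤
        LinearMap.ker (hermitianFunctional p v) ↔ ∑ i, v i * v i ^ p = 0 := by
  constructor
  · intro h
    have hv : v ∈ hermitianPerp p (LinearMap.ker (hermitianFunctional p v)) := by
      intro u hu
      rw [LinearMap.mem_ker, hermitianFunctional_apply] at hu
      exact (hermitian_eq_zero_symm hp hK _ _).1 hu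
    simpa [hermitianFunctional_apply] using h hv
  · intro h y hy
    obtain ⟨c, rfl⟩ := exists_smul_of_ker_le hK (v := v) (w := y) (by
      intro u hu
      rw [LinearMap.mem_ker, hermitianFunctional_apply]
      exact (hermitian_eq_zero_symm hp hK _ _).2 (hy u hu))
    refine Submodule.smul_mem _ _ ?_
    simpa [hermitianFunctional_apply] using h

lemma exists_eq_ker {p : ℕ} (hp : p.Prime) {K : Type*} [Field K] [Fintype K]
    (hK : Fintype.card K = p ^ 2)
    {l : ℕ} (hl : 2 ≤ l) (U : Submodule K (Fin l → K))
    (hU : Module.finrank K U = l - 1) :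
    ∃ v : Fin l → K, v ≠ 0 ∧ LinearMap.ker (hermitianFunctional p v) = U := by
  have hlt : U < ⊤ := by
    rw [lt_top_iff_ne_top]
    rintro rfl
    rw [finrank_top, Module.finrank_fin_fun] at hU
    omega
  obtain ⟨f, hf, hle⟩ := U.exists_le_ker_of_lt_top hlt
  obtain ⟨v, rfl⟩ := exists_hermitianFunctional_eq hK f
  have hv : v ≠ 0 := by
    rintro rfl
    apply hf
    ext
    simp [hermitianFunctional_apply, hp.ne_zero]
  refine ⟨v, hv, (Submodule.eq_of_le_of_finrank_eq hle ?_).symm⟩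
  rw [hU, finrank_ker_hermitianFunctional hp hv]

lemma ker_hermitianFunctional_smul {p : ℕ} {K : Type*} [Field K]
    {l : ℕ} (c : Kˣ) (v : Fin l → K) :
    LinearMap.ker (hermitianFunctional p (c • v)) = LinearMap.ker (hermitianFunctional p v) := by
  ext x
  have : hermitianFunctional p (c • v) x = (c : K) ^ p * hermitianFunctional p v x := by
    simp only [hermitianFunctional_apply, Finset.mul_sum, Pi.smul_apply, Units.smul_def,
      smul_eq_mul]
    exact Finset.sum_congr rfl fun i _ => by ring
  simp [LinearMap.mem_ker, this]

/-- A nonzero isotropic vector amounts to a hyperplane containing its orthogonal complement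
together with a nonzero scalar. -/
lemma card_units_mul_hermitianNu {p : ℕ} (hp : p.Prime) {K : Type*} [Field K] [Fintype K]
    (hK : Fintype.card K = p ^ 2)
    {l : ℕ} (hl : 2 ≤ l) :
    Nat.card Kˣ * hermitianNu p K (l - 1) l =
      Nat.card {v : Fin l → K // v ≠ 0 ∧ ∑ i, v i * v i ^ p = 0} := by
  rw [hermitianNu, ← Nat.card_prod]
  choose g hg0 hg using fun U : {U : Submodule K (Fin l → K) //
    Module.finrank K U = l - 1 ∧ hermitianPerp p U ≤ U} => exists_eq_ker hp hK hl U.1 U.2.1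
  refine Nat.card_congr (Equiv.ofBijective (fun a => ⟨a.1 • g a.2, ?_, ?_⟩) ⟨?_, ?_⟩)
  · rw [Ne, smul_eq_zero_iff_eq]
    exact hg0 _
  · rw [← perp_ker_le_iff hp hK, ker_hermitianFunctional_smul, hg]
    exact a.2.2.2
  · rintro ⟨c, U⟩ ⟨d, W⟩ h
    have h : c • g U = d • g W := congrArg Subtype.val h
    have hUW : U = W := by
      apply Subtype.ext
      rw [← hg U, ← hg W, ← ker_hermitianFunctional_smul c, h, ker_hermitianFunctional_smul]
    subst hUW
    have h' : (c : K) • g U = (d : K) • g U := h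
    rw [Units.ext (smul_left_injective K (hg0 U) h')]
  · rintro ⟨v, hv0, hv⟩
    let U : {U : Submodule K (Fin l → K) //
        Module.finrank K U = l - 1 ∧ hermitianPerp p U ≤ U} :=
      ⟨LinearMap.ker (hermitianFunctional p v), finrank_ker_hermitianFunctional hp hv0,
        (perp_ker_le_iff hp hK v).2 hv⟩
    obtain ⟨c, hc⟩ := exists_smul_of_ker_le hK (hg U).le
    have hc0 : c ≠ 0 := by
      rintro rfl
      exact hv0 (by simpa using hc)
    exact ⟨(Units.mk0 c hc0, U), Subtype.ext hc.symm⟩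

/-! ### Counting isotropic vectors -/

lemma card_units_eq {p : ℕ} {K : Type*} [Field K] [Fintype K]
    (hK : Fintype.card K = p ^ 2) : Nat.card Kˣ = p ^ 2 - 1 := by
  rw [Nat.card_units, Nat.card_eq_fintype_card, hK]

/-- The norm `x ↦ x^{p+1}` takes every nonzero value of the prime field exactly `p + 1` times. -/
lemma card_norm_fiber_s10 {p : ℕ} (hp : p.Prime) {K : Type*} [Field K] [Fintype K]
    (hK : Fintype.card K = p ^ 2)
    {b : K} (hb : b ≠ 0) (hbp : b ^ p = b) :
    Nat.card {x : K // x * x ^ p = b} = p + 1 := by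
  obtain ⟨q, rfl⟩ : ∃ q, p = q + 1 := ⟨p - 1, by have := hp.pos; omega⟩
  have hq : 0 < q := by have := hp.two_le; omega
  have hcard : Nat.card Kˣ = q * (q + 1 + 1) := by
    rw [card_units_eq hK]
    refine Nat.sub_eq_of_eq_add ?_
    ring
  -- Both the norm image and the group of `q`-th roots of unity have order `q`.
  have hrange : (powMonoidHom (q + 1 + 1) : Kˣ →* Kˣ).range = (powMonoidHom q).ker := by
    apply Subgroup.eq_of_le_of_card_ge
    · rintro _ ⟨y, rfl⟩
      rw [MonoidHom.mem_ker, powMonoidHom_apply, powMonoidHom_apply, ← pow_mul, mul_comm,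
        ← hcard, pow_card_eq_one']
    · rw [IsCyclic.card_powMonoidHom_range, IsCyclic.card_powMonoidHom_ker, hcard,
        Nat.gcd_mul_right_left, Nat.gcd_mul_left_left]
      exact (Nat.mul_div_cancel _ (by omega)).ge
  have hmem : Units.mk0 b hb ∈ (powMonoidHom (q + 1 + 1) : Kˣ →* Kˣ).range := by
    rw [hrange, MonoidHom.mem_ker, powMonoidHom_apply]
    ext
    rw [Units.val_pow_eq_pow_val, Units.val_mk0, Units.val_one]
    rw [pow_succ] at hbp
    exact mul_right_cancel₀ hb (by rw [hbp, one_mul])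
  obtain ⟨y, hy⟩ := hmem
  have hy' : (y : K) ^ (q + 1 + 1) = b := by
    have := congrArg Units.val hy
    simpa using this
  have hker : Nat.card (powMonoidHom (q + 1 + 1) : Kˣ →* Kˣ).ker = q + 1 + 1 := by
    rw [IsCyclic.card_powMonoidHom_ker, hcard, Nat.gcd_mul_left_left]
  rw [← hker]
  symm
  refine Nat.card_congr (Equiv.ofBijective (fun z => ⟨y * (z : Kˣ), ?_⟩) ⟨?_, ?_⟩)
  · have hz : ((z : Kˣ) : K) ^ (q + 1 + 1) = 1 := by
      have := congrArg Units.val (MonoidHom.mem_ker.1 z.2)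
      simpa using this
    rw [← pow_succ', mul_pow, hz, hy', mul_one]
  · intro z w h
    have h : (y : K) * (z : Kˣ) = y * (w : Kˣ) := congrArg Subtype.val h
    exact Subtype.ext (Units.ext (mul_left_cancel₀ y.ne_zero h))
  · rintro ⟨x, hx⟩
    have hx0 : x ≠ 0 := by
      rintro rfl
      exact hb (by rw [← hx, zero_mul])
    refine ⟨⟨y⁻¹ * Units.mk0 x hx0, ?_⟩, ?_⟩
    · rw [MonoidHom.mem_ker, map_mul, map_inv, hy, inv_mul_eq_one]
      ext
      simp [← hx, pow_succ']
    · apply Subtype.ext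
      simp

lemma card_norm_fiber_zero {p : ℕ} {K : Type*} [Field K]
    : Nat.card {x : K // x * x ^ p = 0} = 1 := by
  rw [Nat.card_eq_one_iff_unique]
  refine ⟨⟨fun x y => Subtype.ext ?_⟩, ⟨⟨0, by simp⟩⟩⟩
  have hx := x.2
  have hy := y.2
  rw [← pow_succ', pow_eq_zero_iff (by omega)] at hx hy
  rw [hx, hy]

/-- Splitting off the first coordinate of a vector. -/
lemma card_isotropic_succ {p : ℕ} (hp : p.Prime) {K : Type*} [Field K] [Fintype K]
    (hK : Fintype.card K = p ^ 2)
    (l : ℕ) :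
    (Nat.card {v : Fin (l + 1) → K // ∑ i, v i * v i ^ p = 0} : ℤ) =
      Nat.card {v : Fin l → K // ∑ i, v i * v i ^ p = 0} +
        (p + 1) * ((p : ℤ) ^ (2 * l) - Nat.card {v : Fin l → K // ∑ i, v i * v i ^ p = 0}) := by
  classical
  have := Fact.mk hp
  have := charP_of_card_sq hp hK
  let e : {v : Fin (l + 1) → K // ∑ i, v i * v i ^ p = 0} ≃
      Σ w : Fin l → K, {x : K // x * x ^ p = -∑ i, w i * w i ^ p} :=
    { toFun := fun v => ⟨Fin.tail v.1, v.1 0, by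
        have := v.2
        rw [Fin.sum_univ_succ] at this
        exact eq_neg_of_add_eq_zero_left this⟩
      invFun := fun a => ⟨Fin.cons a.2.1 a.1, by
        rw [Fin.sum_univ_succ]
        simp [a.2.2]⟩
      left_inv := fun v => Subtype.ext (Fin.cons_self_tail v.1)
      right_inv := fun a => rfl }
  have hfib : ∀ w : Fin l → K, Nat.card {x : K // x * x ^ p = -∑ i, w i * w i ^ p} =
      if ∑ i, w i * w i ^ p = 0 then 1 else p + 1 := by
    intro w
    split_ifs with h
    · rw [h, neg_zero]
      exact card_norm_fiber_zero
    · refine card_norm_fiber_s10 hp hK (neg_ne_zero.2 h) ?_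
      rw [← zero_sub, sub_pow_char, zero_pow hp.ne_zero, hermitian_symm hp hK]
  rw [Nat.card_congr e, Nat.card_sigma, Finset.sum_congr rfl fun w _ => hfib w,
    Finset.sum_ite, Finset.sum_const, Finset.sum_const, Nat.card_eq_fintype_card,
    Fintype.card_subtype]
  have hsum := Finset.card_filter_add_card_filter_not (s := (Finset.univ : Finset (Fin l → K)))
    (fun w => ∑ i, w i * w i ^ p = 0)
  rw [Finset.card_univ, Fintype.card_pi_const, hK, ← pow_mul] at hsum
  have hsum' := congrArg (Nat.cast : ℕ → ℤ) hsum
  push_cast at hsum'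
  rw [← hsum']
  simp only [smul_eq_mul]
  push_cast
  ring

lemma card_isotropic_formula {p : ℕ} (hp : p.Prime) {K : Type*} [Field K] [Fintype K]
    (hK : Fintype.card K = p ^ 2)
    (l : ℕ) :
    (p : ℤ) * Nat.card {v : Fin l → K // ∑ i, v i * v i ^ p = 0} =
      p ^ (2 * l) + (-1) ^ l * (p - 1) * p ^ l := by
  induction l with
  | zero => simp
  | succ l ih =>
    rw [card_isotropic_succ hp hK]
    linear_combination (-(p : ℤ)) * ih

lemma card_isotropic_eq_succ {p : ℕ} (hp : p.Prime) {K : Type*} [Field K] [Fintype K]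
    (l : ℕ) :
    Nat.card {v : Fin l → K // ∑ i, v i * v i ^ p = 0} =
      Nat.card {v : Fin l → K // v ≠ 0 ∧ ∑ i, v i * v i ^ p = 0} + 1 := by
  classical
  rw [Nat.card_eq_fintype_card, Nat.card_eq_fintype_card, Fintype.card_subtype,
    Fintype.card_subtype, ← Finset.card_erase_add_one (a := (0 : Fin l → K)) (by simp [hp.ne_zero])]
  congr 2
  ext v
  simp

/-- The value of `ν(l-1, l)` with denominators cleared. -/
lemma hermitianNu_mul {p : ℕ} (hp : p.Prime) {K : Type*} [Field K] [Fintype K]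
    (hK : Fintype.card K = p ^ 2)
    {l : ℕ} (hl : 2 ≤ l) :
    (p : ℤ) * ((p ^ 2 - 1) * hermitianNu p K (l - 1) l + 1) =
      p ^ (2 * l) + (-1) ^ l * (p - 1) * p ^ l := by
  rw [← card_isotropic_formula hp hK l, card_isotropic_eq_succ hp,
    ← card_units_mul_hermitianNu hp hK hl, card_units_eq hK]
  have : 1 ≤ p ^ 2 := Nat.one_le_pow _ _ hp.pos
  push_cast [this]
  ring

/-- Let `p > 2` be a prime and `K` a field with `p^2` elements.  For every `l ≥ 2`,
`ν(l−1, l) = (p^l + 1) · Σ_{l−1}` if `l` is odd and `ν(l−1, l) = (p^{l−1} + 1) · Σ_{l−1}`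
if `l` is even, where `Σ_{l−1} = Σ_{j=0}^{⌊(l−2)/2⌋} p^{2j}`. -/
theorem hermitianNu_closed_formula
    (p : ℕ) (hp : p.Prime) (hp2 : 2 < p)
    (K : Type*) [Field K] [Fintype K] (hK : Fintype.card K = p ^ 2)
    (l : ℕ) (hl : 2 ≤ l) :
    (Odd l → hermitianNu p K (l - 1) l =
        (p ^ l + 1) * ∑ j ∈ Finset.range ((l - 2) / 2 + 1), p ^ (2 * j)) ∧
    (Even l → hermitianNu p K (l - 1) l =
        (p ^ (l - 1) + 1) * ∑ j ∈ Finset.range ((l - 2) / 2 + 1), p ^ (2 * j)) := by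
  have h := hermitianNu_mul hp hK hl
  have hp0 : (p : ℤ) ≠ 0 := by exact_mod_cast hp.ne_zero
  have hp1 : (p : ℤ) ^ 2 - 1 ≠ 0 := by
    have : (2 : ℤ) < p := by exact_mod_cast hp2
    nlinarith
  have hgeom : ∀ n : ℕ, (∑ j ∈ Finset.range n, (p : ℤ) ^ (2 * j)) * ((p : ℤ) ^ 2 - 1) =
      p ^ (2 * n) - 1 := by
    intro n
    simp only [pow_mul]
    exact geom_sum_mul _ n
  constructor
  · rintro ⟨k, rfl⟩
    have hk : (2 * k + 1 - 2) / 2 + 1 = k := by omega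
    rw [hk]
    have hg := hgeom k
    zify
    apply mul_left_cancel₀ hp0
    apply mul_left_cancel₀ hp1
    rw [Odd.neg_one_pow ⟨k, rfl⟩] at h
    linear_combination h - (p : ℤ) * (p ^ (2 * k + 1) + 1) * hg
  · rintro ⟨k, rfl⟩
    obtain ⟨m, rfl⟩ : ∃ m, k = m + 1 := ⟨k - 1, by omega⟩
    have hk : (m + 1 + (m + 1) - 2) / 2 + 1 = m + 1 := by omega
    have hk' : m + 1 + (m + 1) - 1 = 2 * m + 1 := by omega
    rw [hk]
    have hg := hgeom (m + 1)
    rw [Even.neg_one_pow ⟨m + 1, rfl⟩] at h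
    rw [hk'] at h ⊢
    zify
    apply mul_left_cancel₀ hp0
    apply mul_left_cancel₀ hp1
    linear_combination h - (p : ℤ) * (p ^ (2 * m + 1) + 1) * hg
end
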